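/- Let P be a vector space partition of F_q^v of type d_l^{u_l}⋯d_2^{u_2}d_1^{u_1}, where u_1, u_2 > 0 and d_l > ⋯ > d_2 > d_1 ≥ 1. If q^{d_2−d_1} does not divide u_1 and d_2 < 2d_1, then u_1 ≥ q^{d_1} + 1. -/

import Mathlib

/-!
For every functional `φ ≠ 0` the members `U ⊄ ker φ` of the partition cut the affine hyperplane
`φ = 1` into pieces of size `q ^ (dim U - 1)`. Since all members of dimension other than `d₁` have
dimension at least `d₂`, the number of `d₁`-dimensional members not contained in `ker φ` is
divisible by `q ^ (d₂ - d₁)`. If `u₁` itself is not, then every `ker φ` contains some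
`d₁`-dimensional member; in other words, the annihilators of these `u₁` members, all of index
`q ^ d₁`, cover the dual space. Subgroups of index at least `n > 1` share the zero element, so more
than `n` of them are needed to cover a finite group.
-/

open Finset Module

section Groups

variable {A B : Type*} [AddGroup A]

theorem card_mul_ncard_preimage_singleton [AddGroup B] {f : A →+ B} (hf : Function.Surjective f)
    (b : B) : Nat.card B * (f ⁻¹' {b}).ncard = Nat.card A := by
  have hker : (f ⁻¹' {b}).ncard = Nat.card f.ker :=
    Nat.card_congr (AddMonoidHom.fiberEquivKerOfSurjective hf b)
  have hindex : f.ker.index = Nat.card B := by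
    rw [AddSubgroup.index_ker, AddMonoidHom.range_eq_top_of_surjective f hf, AddSubgroup.card_top]
  rw [hker, ← hindex, mul_comm, AddSubgroup.card_mul_index]

variable [Finite A] {ι : Type*} {s : Finset ι} {H : ι → AddSubgroup A}

theorem card_add_card_le_sum_card_add_one_of_cover (hcover : ∀ a, ∃ i ∈ s, a ∈ H i) :
    Nat.card A + #s ≤ ∑ i ∈ s, Nat.card (H i) + 1 := by
  have hcompl : ({0}ᶜ : Set A).ncard + 1 = Nat.card A := by
    rw [← Set.ncard_singleton (0 : A), add_comm, Set.ncard_add_ncard_compl]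
  have hdiff (i : ι) : ((H i : Set A) \ {0}).ncard + 1 = Nat.card (H i) :=
    Set.ncard_sdiff_singleton_add_one (H i).zero_mem
  have hsub : ({0}ᶜ : Set A) ⊆ ⋃ i ∈ s, (H i : Set A) \ {0} := fun a ha ↦ by
    obtain ⟨i, hi, hai⟩ := hcover a
    exact Set.mem_biUnion (mem_coe.2 hi) ⟨hai, ha⟩
  have hle : ({0}ᶜ : Set A).ncard ≤ ∑ i ∈ s, ((H i : Set A) \ {0}).ncard :=
    (Set.ncard_le_ncard hsub).trans (s.set_ncard_biUnion_le _)
  simp only [← hcompl, ← hdiff, sum_add_distrib, sum_const, smul_eq_mul, mul_one]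
  omega

theorem lt_card_of_forall_le_index_of_cover {n : ℕ} (hn : 1 < n)
    (hindex : ∀ i ∈ s, n ≤ (H i).index) (hcover : ∀ a, ∃ i ∈ s, a ∈ H i) : n < #s := by
  by_contra! hs
  have hmul : ∀ i ∈ s, n * Nat.card (H i) ≤ Nat.card A := fun i hi ↦ by
    rw [← (H i).index_mul_card]
    exact Nat.mul_le_mul_right _ (hindex i hi)
  have hnA : n ≤ Nat.card A := by
    obtain ⟨i, hi, -⟩ := hcover 0
    exact (Nat.le_mul_of_pos_right n Nat.card_pos).trans (hmul i hi)
  have hsum : n * (Nat.card A + #s) ≤ #s * Nat.card A + n :=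
    calc n * (Nat.card A + #s)
      _ ≤ n * (∑ i ∈ s, Nat.card (H i) + 1) :=
        Nat.mul_le_mul_left n (card_add_card_le_sum_card_add_one_of_cover hcover)
      _ = ∑ i ∈ s, n * Nat.card (H i) + n := by rw [mul_add, mul_sum, mul_one]
      _ ≤ #s * Nat.card A + n := by gcongr; exact sum_le_card_nsmul s _ _ hmul
  -- `n * (|A| - 1) ≤ #s * (|A| - n) ≤ n * (|A| - n)`, which fails for `n > 1`
  nlinarith [Nat.mul_le_mul_right (Nat.card A - n) hs, Nat.sub_add_cancel hnA]

end Groups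

section Functionals

variable {F V : Type*} [Field F] [AddCommGroup V] [Module F V]

theorem index_dualAnnihilator (U : Submodule F V) [Module.Finite F U] :
    U.dualAnnihilator.toAddSubgroup.index = Nat.card F ^ finrank F U := by
  calc U.dualAnnihilator.toAddSubgroup.index
    _ = Nat.card (Dual F U) := Nat.card_congr (Subspace.quotAnnihilatorEquiv U).toEquiv
    _ = Nat.card F ^ finrank F U := by
      rw [natCard_eq_pow_finrank (K := F), Subspace.dual_finrank_eq]

theorem card_mul_ncard_setOf_eq_one [Module.Finite F V] {φ : Dual F V} (hφ : φ ≠ 0) :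
    Nat.card F * {x | φ x = 1}.ncard = Nat.card F ^ finrank F V := by
  rw [← natCard_eq_pow_finrank (K := F) (V := V)]
  exact card_mul_ncard_preimage_singleton (f := φ.toAddMonoidHom) (LinearMap.surjective hφ) 1

theorem card_mul_ncard_inter_setOf_eq_one {U : Submodule F V} [Module.Finite F U]
    {φ : Dual F V} (hU : ¬ U ≤ LinearMap.ker φ) :
    Nat.card F * ((U : Set V) ∩ {x | φ x = 1}).ncard = Nat.card F ^ finrank F U := by
  have hne : φ.domRestrict U ≠ 0 := fun h ↦ hU fun x hx ↦ LinearMap.congr_fun h ⟨x, hx⟩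
  have himage : (U : Set V) ∩ {x | φ x = 1} = U.subtype '' {x | φ.domRestrict U x = 1} := by
    ext x
    simp [and_comm]
  rw [himage, Set.ncard_image_of_injective _ U.injective_subtype]
  exact card_mul_ncard_setOf_eq_one hne

end Functionals

section Partitions

variable {F V : Type*} [Semiring F] [AddCommMonoid V] [Module F V] {P : Finset (Submodule F V)}

/-- A vector space partition: every nonzero vector lies in exactly one of the subspaces in `P`.
The zero subspace is not excluded from `P`, since it contains no nonzero vector. -/
def IsVectorSpacePartition (P : Finset (Submodule F V)) : Prop :=
  ∀ x : V, x ≠ 0 → ∃! U : Submodule F V, U ∈ P ∧ x ∈ U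

/-- The members of dimension `k` of a vector space partition `P`; for the smallest dimension `k`
that occurs, they form what is called the tail of `P`. -/
noncomputable def membersOfFinrank (P : Finset (Submodule F V)) (k : ℕ) :
    Finset (Submodule F V) :=
  P.filter fun U : Submodule F V ↦ finrank F U = k

theorem mem_membersOfFinrank {k : ℕ} {U : Submodule F V} :
    U ∈ membersOfFinrank P k ↔ U ∈ P ∧ finrank F U = k :=
  mem_filter

theorem IsVectorSpacePartition.ncard_eq_sum_ncard_inter (hP : IsVectorSpacePartition P)
    {S : Set V} (hS : S.Finite) (h0 : 0 ∉ S) : S.ncard = ∑ U ∈ P, ((U : Set V) ∩ S).ncard := by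
  have hunion : S = ⋃ U ∈ (P : Set (Submodule F V)), (U : Set V) ∩ S := by
    refine subset_antisymm (fun x hx ↦ ?_) (Set.iUnion₂_subset fun U _ ↦ Set.inter_subset_right)
    obtain ⟨U, ⟨hU, hxU⟩, -⟩ := hP x (ne_of_mem_of_not_mem hx h0)
    exact Set.mem_biUnion (mem_coe.2 hU) ⟨hxU, hx⟩
  have hdisj : (P : Set (Submodule F V)).PairwiseDisjoint fun U ↦ (U : Set V) ∩ S := by
    refine fun U hU W hW hUW ↦ Set.disjoint_left.2 fun x hxU hxW ↦ hUW ?_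
    exact (hP x (ne_of_mem_of_not_mem hxU.2 h0)).unique ⟨hU, hxU.1⟩ ⟨hW, hxW.1⟩
  conv_lhs => rw [hunion]
  rw [P.finite_toSet.ncard_biUnion (fun U _ ↦ hS.inter_of_right U) hdisj, finsum_mem_coe_finset]

end Partitions

namespace IsVectorSpacePartition

variable {F V : Type*} [Field F] [Finite F] [AddCommGroup V] [Module F V] [Module.Finite F V]
  {P : Finset (Submodule F V)}

open scoped Classical in
theorem sum_pow_finrank_eq (hP : IsVectorSpacePartition P) {φ : Dual F V} (hφ : φ ≠ 0) :
    ∑ U ∈ P with ¬ U ≤ LinearMap.ker φ, Nat.card F ^ finrank F U =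
      Nat.card F ^ finrank F V := by
  have : Finite V := Module.finite_of_finite F
  have hnle : ∀ U ∈ P, ((U : Set V) ∩ {x | φ x = 1}).ncard ≠ 0 → ¬ U ≤ LinearMap.ker φ := by
    intro U _ hne hU
    obtain ⟨x, hxU, hx⟩ := Set.nonempty_of_ncard_ne_zero hne
    exact one_ne_zero (hx.symm.trans (hU hxU))
  rw [← card_mul_ncard_setOf_eq_one hφ, hP.ncard_eq_sum_ncard_inter (Set.toFinite _) (by simp),
    ← sum_filter_of_ne hnle, mul_sum]
  exact sum_congr rfl fun U hU ↦ (card_mul_ncard_inter_setOf_eq_one (mem_filter.1 hU).2).symm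

variable {k e : ℕ}

open scoped Classical in
theorem pow_dvd_card_membersOfFinrank_mul_pow (hP : IsVectorSpacePartition P)
    (heV : e ≤ finrank F V) (hgap : ∀ U ∈ P, finrank F U ≠ k → e ≤ finrank F U)
    (φ : Dual F V) :
    Nat.card F ^ e ∣
      #(membersOfFinrank (P.filter (¬ · ≤ LinearMap.ker φ)) k) * Nat.card F ^ k := by
  obtain rfl | hφ := eq_or_ne φ 0
  · simp [membersOfFinrank]
  set Q := P.filter (¬ · ≤ LinearMap.ker φ)
  have hsub : membersOfFinrank Q k ⊆ Q := filter_subset _ _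
  have hsmall : ∑ U ∈ membersOfFinrank Q k, Nat.card F ^ finrank F U =
      #(membersOfFinrank Q k) * Nat.card F ^ k :=
    sum_const_nat fun U hU ↦ by rw [(mem_membersOfFinrank.1 hU).2]
  have hlarge : Nat.card F ^ e ∣ ∑ U ∈ Q \ membersOfFinrank Q k, Nat.card F ^ finrank F U := by
    refine dvd_sum fun U hU ↦ pow_dvd_pow _ ?_
    obtain ⟨hUQ, hUk⟩ := mem_sdiff.1 hU
    exact hgap U (mem_filter.1 hUQ).1 fun h ↦ hUk (mem_membersOfFinrank.2 ⟨hUQ, h⟩)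
  rw [← hsmall, ← Nat.dvd_add_right hlarge, sum_sdiff hsub, hP.sum_pow_finrank_eq hφ]
  exact pow_dvd_pow _ heV

theorem exists_mem_membersOfFinrank_le_ker (hP : IsVectorSpacePartition P)
    (heV : e ≤ finrank F V) (hgap : ∀ U ∈ P, finrank F U ≠ k → e ≤ finrank F U)
    (hndvd : ¬ Nat.card F ^ (e - k) ∣ #(membersOfFinrank P k)) (φ : Dual F V) :
    ∃ U ∈ membersOfFinrank P k, U ≤ LinearMap.ker φ := by
  classical
  by_contra! hnle
  have hke : k ≤ e := by
    by_contra! hek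
    simp [Nat.sub_eq_zero_of_le hek.le] at hndvd
  have hall : membersOfFinrank (P.filter (¬ · ≤ LinearMap.ker φ)) k = membersOfFinrank P k := by
    rw [membersOfFinrank, filter_comm]
    exact filter_true_of_mem hnle
  have hdvd := hP.pow_dvd_card_membersOfFinrank_mul_pow heV hgap φ
  rw [hall, ← pow_sub_mul_pow _ hke] at hdvd
  exact hndvd (Nat.dvd_of_mul_dvd_mul_right (pow_pos Nat.card_pos k) hdvd)

theorem pow_lt_card_membersOfFinrank (hP : IsVectorSpacePartition P) (hk : k ≠ 0)
    (heV : e ≤ finrank F V) (hgap : ∀ U ∈ P, finrank F U ≠ k → e ≤ finrank F U)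
    (hndvd : ¬ Nat.card F ^ (e - k) ∣ #(membersOfFinrank P k)) :
    Nat.card F ^ k < #(membersOfFinrank P k) := by
  have : Finite (Dual F V) := Module.finite_of_finite F
  refine lt_card_of_forall_le_index_of_cover (H := fun U ↦ U.dualAnnihilator.toAddSubgroup)
    (Nat.one_lt_pow hk Finite.one_lt_card) (fun U hU ↦ ?_) fun φ ↦ ?_
  · rw [index_dualAnnihilator, (mem_membersOfFinrank.1 hU).2]
  · obtain ⟨U, hU, hUφ⟩ := hP.exists_mem_membersOfFinrank_le_ker heV hgap hndvd φ
    exact ⟨U, hU, (Submodule.mem_dualAnnihilator φ).2 fun x hx ↦ hUφ hx⟩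

end IsVectorSpacePartition

theorem heden_tail_i_general {F V : Type*} [Field F] [Finite F] [AddCommGroup V] [Module F V]
    [Module.Finite F V] {l : ℕ} (hl : 2 ≤ l) {d u : Fin l → ℕ} (hd : StrictMono d)
    (hd1 : 1 ≤ d ⟨0, by omega⟩) (hu2 : 0 < u ⟨1, by omega⟩)
    {P : Finset (Submodule F V)} (hP : IsVectorSpacePartition P)
    (htype : ∀ U ∈ P, ∃ i : Fin l, finrank F U = d i)
    (hcount : ∀ i : Fin l, u i = {U : Submodule F V | U ∈ P ∧ finrank F U = d i}.ncard)
    (hndvd : ¬ Nat.card F ^ (d ⟨1, by omega⟩ - d ⟨0, by omega⟩) ∣ u ⟨0, by omega⟩) :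
    Nat.card F ^ d ⟨0, by omega⟩ + 1 ≤ u ⟨0, by omega⟩ := by
  have hcard (i : Fin l) : u i = #(membersOfFinrank P (d i)) := by
    rw [hcount, ← Set.ncard_coe_finset, membersOfFinrank, coe_filter]
  have heV : d ⟨1, by omega⟩ ≤ finrank F V := by
    rw [hcard, card_pos] at hu2
    obtain ⟨U, hU⟩ := hu2
    exact (mem_membersOfFinrank.1 hU).2 ▸ U.finrank_le
  have hgap : ∀ U ∈ P, finrank F U ≠ d ⟨0, by omega⟩ → d ⟨1, by omega⟩ ≤ finrank F U := by
    intro U hU hne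
    obtain ⟨i, hi⟩ := htype U hU
    have hi0 : i ≠ ⟨0, by omega⟩ := fun h ↦ hne (h ▸ hi)
    exact hi ▸ hd.monotone (Nat.one_le_iff_ne_zero.2 (Fin.val_ne_of_ne hi0))
  rw [hcard] at hndvd ⊢
  exact hP.pow_lt_card_membersOfFinrank (Nat.one_le_iff_ne_zero.1 hd1) heV hgap hndvd

/-- Heden Theorem 1(i): if `q^{d_2-d_1} ∤ u_1` and `d_2 < 2d_1`, then `u_1 ≥ q^{d_1} + 1`.
Here `d 0 = d_1`, `d 1 = d_2`. -/
theorem heden_tail_i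
    {F : Type} [Field F] [Fintype F] (q v l : ℕ)
    (hq : q = Fintype.card F) (hl : 2 ≤ l)
    (d u : Fin l → ℕ) (hd : StrictMono d) (hd1 : 1 ≤ d ⟨0, by omega⟩)
    (hu1 : 0 < u ⟨0, by omega⟩) (hu2 : 0 < u ⟨1, by omega⟩)
    (P : Finset (Submodule F (Fin v → F)))
    (hpart : ∀ x : Fin v → F, x ≠ 0 →
      ∃! U : Submodule F (Fin v → F), U ∈ P ∧ x ∈ U)
    (htype : ∀ U ∈ P, ∃ i : Fin l, Module.finrank F ↥U = d i)
    (hcount : ∀ i : Fin l, u i = Set.ncard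
      {U : Submodule F (Fin v → F) | U ∈ P ∧ Module.finrank F ↥U = d i})
    (hndvd : ¬ q ^ (d ⟨1, by omega⟩ - d ⟨0, by omega⟩) ∣ u ⟨0, by omega⟩)
    (hcase : d ⟨1, by omega⟩ < 2 * d ⟨0, by omega⟩) :
    q ^ d ⟨0, by omega⟩ + 1 ≤ u ⟨0, by omega⟩ := by
  obtain rfl : q = Nat.card F := hq.trans Nat.card_eq_fintype_card.symm
  exact heden_tail_i_general hl hd hd1 hu2 hpart htype hcount hndvd
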